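/- Let A be a finite invertible Mealy automaton over X and let B be a subautomaton of A (a nonempty subset of the states of A closed under transitions, with the induced transition-output function). Suppose there exists an integer n such that s|_v is a state of B for every state s of A and every word v ∈ X^n. Then the group G_A is finite if and only if the group G_B is finite. -/

import Mathlib

/-- A Mealy automaton over alphabet `X` with state set `S`:
the transition-output function sends `(s, x)` to `(output letter, next state)`. -/
structure Mealy (S X : Type*) where
  step : S → X → X × S

namespace Mealy

variable {S X : Type*}

/-- The section `s|_v`: the state reached after processing the word `v` from state `s`. -/
def sec (A : Mealy S X) (s : S) : List X → S
  | [] => s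
  | x :: v => A.sec (A.step s x).2 v

/-- The action of a state on finite words (lists of letters, read left to right). -/
def act (A : Mealy S X) (s : S) : List X → List X
  | [] => []
  | x :: v => (A.step s x).1 :: A.act (A.step s x).2 v

/-- A state is trivial if it acts on `X^*` as the identity. -/
def IsTrivialState (A : Mealy S X) (s : S) : Prop := ∀ v : List X, A.act s v = v

/-- An automaton is invertible if every state acts on the letters by a permutation. -/
def Invertible (A : Mealy S X) : Prop :=
  ∀ s : S, Function.Bijective fun x : X => (A.step s x).1

/-- The automaton group `G_A`: the subgroup of permutations of `X^*` generated by
the permutations defined by the states of `A`. -/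
def autGroup (A : Mealy S X) : Subgroup (Equiv.Perm (List X)) :=
  Subgroup.closure { f : Equiv.Perm (List X) | ∃ s : S, ∀ v : List X, f v = A.act s v }

/-- A left-infinite sequence `…x₂x₁` is encoded as `p : ℕ → X` with `p 0 = x₁`, `p 1 = x₂`, ….
It is post-critical if it is the sequence of input labels or of output labels of a
left-infinite directed path in `A` ending at a non-trivial state. -/
def IsPostCritical (A : Mealy S X) (p : ℕ → X) : Prop :=
  ∃ (σ : ℕ → S) (inp out : ℕ → X),
    (∀ n, A.step (σ (n + 1)) (inp n) = (out n, σ n)) ∧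
      ¬A.IsTrivialState (σ 0) ∧ (p = inp ∨ p = out)

/-- The post-critical set of `A`. -/
def PostCriticalSet (A : Mealy S X) : Set (ℕ → X) := { p | A.IsPostCritical p }

/-- An automaton is bounded if its post-critical set is finite. -/
def Bounded (A : Mealy S X) : Prop := A.PostCriticalSet.Finite

/-- The length-`n` suffix (as a finite word, read left to right) of a left-infinite
sequence `…x₂x₁` encoded as `p : ℕ → X`: the word `xₙ…x₂x₁`. -/
def lsuffix (p : ℕ → X) (n : ℕ) : List X := (List.range n).reverse.map p

/-- A finite word is post-critical if it is a suffix of some post-critical sequence. -/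
def IsPostCriticalWord (A : Mealy S X) (v : List X) : Prop :=
  ∃ p : ℕ → X, A.IsPostCritical p ∧ v = lsuffix p v.length

/-- The base relation for `e`-equivalence: `v ≈ u` if some state `s` satisfies
`s|_v` trivial and `s(v) = u`, or `s|_u` trivial and `s(u) = v`. -/
def ERel (A : Mealy S X) (v u : List X) : Prop :=
  ∃ s : S, (A.IsTrivialState (A.sec s v) ∧ A.act s v = u) ∨
    (A.IsTrivialState (A.sec s u) ∧ A.act s u = v)

/-- `e`-equivalence: the equivalence relation generated by `≈`. -/
def EEquiv (A : Mealy S X) : List X → List X → Prop := Relation.EqvGen A.ERel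

/-- The `e`-orbit of a word. -/
def eOrbit (A : Mealy S X) (v : List X) : Set (List X) := { u | A.EEquiv v u }

/-- The orbit of a finite word under the automaton group. -/
def orbit (A : Mealy S X) (v : List X) : Set (List X) := { u | ∃ g ∈ A.autGroup, g v = u }

/-- Reachability by a directed path in the automaton. -/
def Reaches (A : Mealy S X) : S → S → Prop :=
  Relation.ReflTransGen fun a b => ∃ x : X, (A.step a x).2 = b

/-- The states of the circuit part `C(A)`: states reachable by a directed path
from some directed cycle of `A`. -/
def circuitStates (A : Mealy S X) : Set S :=
  { s | ∃ t : S, (∃ x : X, A.Reaches (A.step t x).2 t) ∧ A.Reaches t s }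

/-- The circuit part `C(A)` as a subautomaton. -/
def circuitPart (A : Mealy S X) : Mealy A.circuitStates X where
  step s x :=
    ((A.step s.1 x).1,
      ⟨(A.step s.1 x).2, by
        obtain ⟨t, hc, hr⟩ := s.2
        exact ⟨t, hc, hr.tail ⟨x, rfl⟩⟩⟩)

/-- The subautomaton induced on a subset of states closed under transitions. -/
def subautomaton (A : Mealy S X) (T : Set S)
    (hT : ∀ s ∈ T, ∀ x : X, (A.step s x).2 ∈ T) : Mealy T X where
  step s x := ((A.step s.1 x).1, ⟨(A.step s.1 x).2, hT s.1 s.2 x⟩)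

/-- The extension of a length- and prefix-preserving map on finite words to
right-infinite sequences (letter by letter). -/
def extOmega (f : List X → List X) (w : ℕ → X) : ℕ → X :=
  fun n => (f ((List.range (n + 1)).map w)).getD n (w n)

/-- The orbit of a right-infinite sequence under the automaton group. -/
def orbitOmega (A : Mealy S X) (w : ℕ → X) : Set (ℕ → X) :=
  { w' | ∃ g ∈ A.autGroup, w' = extOmega (⇑(g : Equiv.Perm (List X))) w }

/-- The group `G_A` is level-transitive if it acts transitively on each level `X^n`. -/
def LevelTransitive (A : Mealy S X) : Prop :=
  ∀ v u : List X, v.length = u.length → ∃ g ∈ A.autGroup, g v = u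

end Mealy

/-- The run of a deterministic finite-state machine on a right-infinite input:
`dfaRun δ q₀ w n` is the state after reading the first `n` letters. -/
def dfaRun {Q X : Type*} (δ : Q → X → Q) (q₀ : Q) (w : ℕ → X) : ℕ → Q
  | 0 => q₀
  | n + 1 => δ (dfaRun δ q₀ w n) (w n)

/-- A concrete encoding of an invertible Mealy automaton (with state set `Fin n`
over alphabet `Fin k`) as a natural number. -/
def encodeAut (n k : ℕ) (step : Fin n → Fin k → Fin k × Fin n) : ℕ :=
  Nat.pair n (Nat.pair k (Encodable.encode
    ((List.finRange n).flatMap fun s =>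
      (List.finRange k).map fun x =>
        Nat.pair ((step s x).1 : ℕ) ((step s x).2 : ℕ))))

/-!
A permutation `g` of `X^*` that preserves lengths and has a section at every word of length `n` is
determined by its values on words of length at most `n` together with these sections. Over a
finite alphabet there are finitely many such words, so only finitely many such `g` have all these
sections in a given finite group `H`. For any group `H` these `g` form a group. When `H = G_B` it
contains the generators of `G_A`: they are the states acting bijectively on `X^*`, whose sections
act bijectively as well, and at level `n` these sections are states of `B`.
-/

namespace Mealy

variable {S X : Type*}

/-- The length-preserving permutations of `X^*` having a section in `H` at every word of length `n`:
the group that contains `G_A` when all sections of states of `A` at level `n` act as elements of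
`H`. Prefix preservation is imposed at level `n` only. -/
def levelSectionSubgroup (H : Subgroup (Equiv.Perm (List X))) (n : ℕ) :
    Subgroup (Equiv.Perm (List X)) where
  carrier := { g | (∀ v, (g v).length = v.length) ∧
    ∀ v, v.length = n → ∃ h ∈ H, ∀ w, g (v ++ w) = g v ++ h w }
  one_mem' := ⟨fun _ => rfl, fun _ _ => ⟨1, one_mem H, fun _ => rfl⟩⟩
  mul_mem' := by
    rintro a b ⟨ha_length, ha_section⟩ ⟨hb_length, hb_section⟩
    refine ⟨fun v => (ha_length (b v)).trans (hb_length v), fun v hv => ?_⟩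
    obtain ⟨h, hh, hbv⟩ := hb_section v hv
    obtain ⟨k, hk, hav⟩ := ha_section (b v) ((hb_length v).trans hv)
    exact ⟨k * h, mul_mem hk hh, fun w => by simp only [Equiv.Perm.mul_apply, hbv, hav]⟩
  inv_mem' := by
    rintro a ⟨ha_length, ha_section⟩
    have apply_inv (p : Equiv.Perm (List X)) (v : List X) : p (p⁻¹ v) = v := p.apply_symm_apply v
    have hinv_length (v : List X) : (a⁻¹ v).length = v.length := by
      rw [← ha_length, apply_inv]
    refine ⟨hinv_length, fun v hv => ?_⟩
    obtain ⟨h, hh, hav⟩ := ha_section (a⁻¹ v) ((hinv_length v).trans hv)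
    refine ⟨h⁻¹, inv_mem hh, fun w => ?_⟩
    rw [Equiv.Perm.inv_eq_iff_eq, hav, apply_inv, apply_inv]

theorem funext_of_common_sections {Y : Type*} {f g : List X → List Y} {n : ℕ}
    (hle : ∀ v, v.length ≤ n → f v = g v)
    (hsection : ∀ v, v.length = n → ∃ σ : List X → List Y,
      (∀ w, f (v ++ w) = f v ++ σ w) ∧ ∀ w, g (v ++ w) = g v ++ σ w) : f = g := by
  funext v
  rcases le_total v.length n with hv | hv
  · exact hle v hv
  · have htake : (v.take n).length = n := List.length_take_of_le hv
    obtain ⟨σ, hf, hg⟩ := hsection (v.take n) htake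
    rw [← List.take_append_drop n v, hf, hg, hle _ htake.le]

theorem finite_levelSectionSubgroup [Finite X] (H : Subgroup (Equiv.Perm (List X))) [Finite H]
    (n : ℕ) : Finite (levelSectionSubgroup H n) := by
  have : Finite { v : List X // v.length ≤ n } := (List.finite_length_le X n).to_subtype
  have : Finite { v : List X // v.length = n } := (List.finite_length_eq X n).to_subtype
  choose σ hσ_mem hσ using fun g : levelSectionSubgroup H n => g.2.2
  let restriction (g : levelSectionSubgroup H n) (v : { v : List X // v.length ≤ n }) :
      { v : List X // v.length ≤ n } := ⟨g.1 v, (g.2.1 v).trans_le v.2⟩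
  let sections (g : levelSectionSubgroup H n) (v : { v : List X // v.length = n }) : H :=
    ⟨σ g v v.2, hσ_mem g v v.2⟩
  refine Finite.of_injective (fun g => (restriction g, sections g)) fun g g' heq => ?_
  obtain ⟨hrestriction, hsections⟩ := Prod.mk.inj heq
  refine Subtype.ext (DFunLike.coe_injective (funext_of_common_sections (n := n) ?_ ?_))
  · exact fun v hv => congrArg Subtype.val (congrFun hrestriction ⟨v, hv⟩)
  · intro v hv
    have hσ_eq : σ g v hv = σ g' v hv := congrArg Subtype.val (congrFun hsections ⟨v, hv⟩)
    exact ⟨σ g v hv, hσ g v hv, hσ_eq ▸ hσ g' v hv⟩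

theorem length_act (A : Mealy S X) (s : S) (v : List X) : (A.act s v).length = v.length := by
  induction v generalizing s with
  | nil => rfl
  | cons x v ih => simp only [act, List.length_cons, ih]

theorem act_append (A : Mealy S X) (s : S) (v w : List X) :
    A.act s (v ++ w) = A.act s v ++ A.act (A.sec s v) w := by
  induction v generalizing s with
  | nil => rfl
  | cons x v ih => simp only [List.cons_append, act, sec, ih]

theorem act_sec_bijective (A : Mealy S X) {s : S} (hs : Function.Bijective (A.act s))
    (v : List X) : Function.Bijective (A.act (A.sec s v)) := by
  refine ⟨fun w w' hw => ?_, fun u => ?_⟩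
  · have h : A.act s (v ++ w) = A.act s (v ++ w') := by rw [act_append, act_append, hw]
    exact List.append_cancel_left (hs.1 h)
  · obtain ⟨z, hz⟩ := hs.2 (A.act s v ++ u)
    have hv_le : v.length ≤ z.length := by
      rw [← A.length_act s z, hz, List.length_append, length_act]
      exact Nat.le_add_right _ _
    rw [← List.take_append_drop v.length z, act_append] at hz
    obtain ⟨hprefix, hsuffix⟩ := List.append_inj hz <| by
      rw [length_act, length_act, List.length_take_of_le hv_le]
    refine ⟨z.drop v.length, ?_⟩
    rwa [hs.1 hprefix] at hsuffix

theorem act_subautomaton (A : Mealy S X) {T : Set S} (hT : ∀ s ∈ T, ∀ x : X, (A.step s x).2 ∈ T)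
    (s : T) (v : List X) : (A.subautomaton T hT).act s v = A.act s v := by
  induction v generalizing s with
  | nil => rfl
  | cons x v ih => exact congrArg ((A.step s x).1 :: ·) (ih _)

theorem autGroup_subautomaton_le (A : Mealy S X) {T : Set S}
    (hT : ∀ s ∈ T, ∀ x : X, (A.step s x).2 ∈ T) : (A.subautomaton T hT).autGroup ≤ A.autGroup :=
  Subgroup.closure_mono fun _ ⟨s, hs⟩ => ⟨s, fun v => (hs v).trans (A.act_subautomaton hT s v)⟩

theorem autGroup_le_levelSectionSubgroup (A : Mealy S X) {T : Set S}
    (hT : ∀ s ∈ T, ∀ x : X, (A.step s x).2 ∈ T) {n : ℕ}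
    (hn : ∀ (s : S) (v : List X), v.length = n → A.sec s v ∈ T) :
    A.autGroup ≤ levelSectionSubgroup (A.subautomaton T hT).autGroup n := by
  refine (Subgroup.closure_le _).2 ?_
  rintro f ⟨s, hs⟩
  have hbij : Function.Bijective (A.act s) := funext hs ▸ f.bijective
  refine ⟨fun v => by rw [hs, length_act], fun v hv => ?_⟩
  refine ⟨Equiv.ofBijective _ (A.act_sec_bijective hbij v), Subgroup.subset_closure ?_, fun w => ?_⟩
  · exact ⟨⟨A.sec s v, hn s v hv⟩, fun w => (A.act_subautomaton hT ⟨_, hn s v hv⟩ w).symm⟩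
  · rw [hs, hs, act_append, Equiv.ofBijective_apply]

end Mealy

theorem finite_iff_finite_subautomaton_general {S X : Type*} [Finite X] (A : Mealy S X)
    (T : Set S) (hT : ∀ s ∈ T, ∀ x : X, (A.step s x).2 ∈ T)
    (n : ℕ) (hn : ∀ (s : S) (v : List X), v.length = n → A.sec s v ∈ T) :
    Finite A.autGroup ↔ Finite (A.subautomaton T hT).autGroup := by
  constructor <;> intro hfinite
  · exact Finite.of_injective _ (Subgroup.inclusion_injective (A.autGroup_subautomaton_le hT))
  · have := Mealy.finite_levelSectionSubgroup (A.subautomaton T hT).autGroup n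
    exact Finite.of_injective _
      (Subgroup.inclusion_injective (A.autGroup_le_levelSectionSubgroup hT hn))

/-- If `B` is a subautomaton of a finite invertible automaton `A` and
there is `n` with `s|_v ∈ B` for every state `s` of `A` and every `v ∈ Xⁿ`, then
`G_A` is finite iff `G_B` is finite. -/
theorem finite_iff_finite_subautomaton {S X : Type*} [Fintype S] [Fintype X]
    (hX : 2 ≤ Fintype.card X) (A : Mealy S X) (hInv : A.Invertible)
    (T : Set S) (hTne : T.Nonempty)
    (hT : ∀ s ∈ T, ∀ x : X, (A.step s x).2 ∈ T)
    (n : ℕ) (hn : ∀ (s : S) (v : List X), v.length = n → A.sec s v ∈ T) :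
    Finite A.autGroup ↔ Finite (A.subautomaton T hT).autGroup :=
  finite_iff_finite_subautomaton_general A T hT n hn
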